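/- With all heat operators taken with index m = 1, the weak Jacobi form φ_{0,1} satisfies H^{(1)}_{0}(φ_{0,1})(τ,z) = −(5/2)·E₄(τ)·φ_{−2,1}(τ,z) for all (τ,z) ∈ ℍ × ℂ. -/

import Mathlib

/-!
Write `tₖ = ∂_z^k ϑ` (`thetaD k`), computed termwise from the series. The heat equation
`∂_τ tₖ = tₖ₊₂ / (4πi)` and `η'/η = (πi/12) E₂` turn the claim into an algebraic relation between
`t₀, …, t₄`, `E₂`, `E₂'` and `E₄`. By Ramanujan's identity `E₂' = (2πi/12)(E₂² - E₄)` this relation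
is the Hirota form of the differential equation of `℘` (`hirota_theta`):
`F = -4π² E₂ A + 4π³i E₂' ϑ²` with `A = t₀t₂ - t₁²` and `F = t₀t₄ - 4t₁t₃ + 3t₂²`.

The Hirota equation comes from the addition formula
`ϑ(z+u) ϑ(z-u) = odd(z) even(u) - even(z) odd(u)` (`theta_addition`): differentiating in `u` at
`u = 0` shows that `ϑ²`, `A` and `F` lie in the span of two functions of `z`, and a combination of
`F` and `A` vanishing at `z = 0` is then a multiple of `ϑ²`. The two constants are read off at
`z = 0`; they involve only the theta constant `t₁(τ,0)` and its `τ`-derivatives.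

The theta constant is identified up to a scalar through its eighth power, a cusp form of weight 12
and level one, hence a multiple of `Δ = η²⁴`; this gives `t₃(τ,0) = -π² E₂ t₁(τ,0)`. Ramanujan's
identity holds because the difference of its sides is a cusp form of weight 4 and level one.
-/

open Complex Real

noncomputable section

/-- The Jacobi theta series `ϑ(τ,z) = q^{1/8} ζ^{1/2} ∑_{n∈ℤ} (−1)^n q^{n(n+1)/2} ζ^n`
with `q = e^{2πiτ}`, `ζ = e^{2πiz}`. -/
def thetaJ (τ z : ℂ) : ℂ :=
  Complex.exp (π * I * τ / 4) * Complex.exp (π * I * z) *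
    ∑' n : ℤ, (-1 : ℂ) ^ n * Complex.exp (π * I * τ * n * (n + 1)) *
      Complex.exp (2 * π * I * z * n)

/-- The Dedekind eta function `η(τ) = q^{1/24} ∏_{n≥1} (1 − q^n)`. -/
def etaD (τ : ℂ) : ℂ :=
  Complex.exp (π * I * τ / 12) * ∏' n : ℕ, (1 - Complex.exp (2 * π * I * τ * (n + 1)))

/-- The divisor power sum `σ_k(n) = ∑_{d ∣ n} d^k`. -/
def sigmaD (k n : ℕ) : ℕ := ∑ d ∈ n.divisors, d ^ k

/-- The quasi-modular Eisenstein series `E₂`. -/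
def Eis2 (τ : ℂ) : ℂ :=
  1 - 24 * ∑' n : ℕ, (sigmaD 1 (n + 1) : ℂ) * Complex.exp (2 * π * I * τ * (n + 1))

/-- The Eisenstein series `E₄`. -/
def Eis4 (τ : ℂ) : ℂ :=
  1 + 240 * ∑' n : ℕ, (sigmaD 3 (n + 1) : ℂ) * Complex.exp (2 * π * I * τ * (n + 1))

/-- The Eisenstein series `E₆`. -/
def Eis6 (τ : ℂ) : ℂ :=
  1 - 504 * ∑' n : ℕ, (sigmaD 5 (n + 1) : ℂ) * Complex.exp (2 * π * I * τ * (n + 1))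

/-- The heat operator `H^{(m)}φ = (12/(2πi)) ∂φ/∂τ + (3/(4π²m)) ∂²φ/∂z²` of index `m`. -/
def heatOp (m : ℚ) (φ : ℂ → ℂ → ℂ) (τ z : ℂ) : ℂ :=
  12 / (2 * π * I) * deriv (fun t => φ t z) τ
    + 3 / (4 * π ^ 2 * (m : ℂ)) * deriv (deriv (φ τ)) z

/-- The modular heat operator `H^{(m)}_k φ = H^{(m)}φ − ((2k−1)/2)·E₂·φ`. -/
def heatMod (m k : ℚ) (φ : ℂ → ℂ → ℂ) (τ z : ℂ) : ℂ :=
  heatOp m φ τ z - (2 * (k : ℂ) - 1) / 2 * Eis2 τ * φ τ z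

/-- The weak Jacobi form `φ_{−2,1} = ϑ²/η⁶` of weight −2 and index 1. -/
def phim21 (τ z : ℂ) : ℂ := thetaJ τ z ^ 2 / etaD τ ^ 6

/-- The weak Jacobi form `φ_{0,1}` of weight 0 and index 1:
`φ_{0,1} = (3/π²)·(ϑ·∂²ϑ/∂z² − (∂ϑ/∂z)²)/η⁶ + E₂·ϑ²/η⁶`. -/
def phi01 (τ z : ℂ) : ℂ :=
  3 / (π : ℂ) ^ 2 *
      (thetaJ τ z * deriv (deriv (thetaJ τ)) z - (deriv (thetaJ τ) z) ^ 2) / etaD τ ^ 6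
    + Eis2 τ * thetaJ τ z ^ 2 / etaD τ ^ 6

/-! ### The theta series and the heat equation -/

/-- The `n`-th term of the `k`-th `z`-derivative of the theta series, written with the
half-integral exponent `n + 1/2`. -/
def thetaTerm (k : ℕ) (τ z : ℂ) (n : ℤ) : ℂ :=
  (2 * π * I * (n + 1 / 2)) ^ k *
    ((-1 : ℂ) ^ n * cexp (π * I * (n + 1 / 2) ^ 2 * τ + 2 * π * I * (n + 1 / 2) * z))

/-- The `k`-th `z`-derivative `∂_z^k ϑ(τ,z)`, as a series. -/
def thetaD (k : ℕ) (τ z : ℂ) : ℂ := ∑' n : ℤ, thetaTerm k τ z n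

/-- A summable majorant of `thetaTerm k τ z` on the region `|Im z| ≤ S`, `T ≤ Im τ`. -/
def thetaBound (k : ℕ) (S T : ℝ) (n : ℤ) : ℝ :=
  (2 * π) ^ k * (2 ^ k * (|(n : ℝ)| ^ k + 1)) *
    (rexp (π * S) * rexp (-π * (T * n ^ 2 - 2 * (S + T / 2) * |(n : ℝ)|)))

lemma summable_thetaBound (k : ℕ) (S : ℝ) {T : ℝ} (hT : 0 < T) :
    Summable (thetaBound k S T) := by
  have h1 := summable_pow_mul_jacobiTheta₂_term_bound (S + T / 2) hT k
  have h2 := summable_pow_mul_jacobiTheta₂_term_bound (S + T / 2) hT 0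
  refine ((h1.add h2).mul_left ((2 * π) ^ k * 2 ^ k * rexp (π * S))).congr fun n => ?_
  simp only [thetaBound, Int.cast_abs]
  ring

lemma norm_thetaTerm_le (k : ℕ) {S T : ℝ} {τ z : ℂ} (hT : 0 < T) (hz : |z.im| ≤ S)
    (hτ : T ≤ τ.im) (n : ℤ) : ‖thetaTerm k τ z n‖ ≤ thetaBound k S T n := by
  have hS : 0 ≤ S := (abs_nonneg _).trans hz
  have hcast : ((n : ℂ) + 1 / 2) = (((n : ℝ) + 1 / 2 : ℝ) : ℂ) := by push_cast; ring
  have habs : |(n : ℝ) + 1 / 2| ≤ |(n : ℝ)| + 1 / 2 := by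
    refine (abs_add_le _ _).trans (le_of_eq ?_)
    rw [abs_of_pos (by norm_num : (0 : ℝ) < 1 / 2)]
  rw [thetaTerm, thetaBound, norm_mul, norm_mul, norm_pow, norm_zpow, norm_neg, norm_one,
    one_zpow, one_mul, Complex.norm_exp]
  refine mul_le_mul ?_ ?_ (by positivity) (by positivity)
  · rw [norm_mul, mul_pow, hcast, Complex.norm_real, Real.norm_eq_abs]
    have h1 : ‖(2 * π * I : ℂ)‖ = 2 * π := by
      simp [abs_of_pos Real.pi_pos]
    rw [h1]
    refine mul_le_mul_of_nonneg_left ?_ (by positivity)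
    calc |(n : ℝ) + 1 / 2| ^ k ≤ (|(n : ℝ)| + 1) ^ k := by
          gcongr
          linarith
      _ ≤ 2 ^ (k - 1) * (|(n : ℝ)| ^ k + 1 ^ k) := add_pow_le (abs_nonneg _) zero_le_one k
      _ ≤ 2 ^ k * (|(n : ℝ)| ^ k + 1) := by
          rw [one_pow]
          gcongr
          · norm_num
          · omega
  · rw [← Real.exp_add, Real.exp_le_exp, hcast]
    have hre : (π * I * (((n : ℝ) + 1 / 2 : ℝ) : ℂ) ^ 2 * τ
        + 2 * π * I * (((n : ℝ) + 1 / 2 : ℝ) : ℂ) * z).re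
        = -π * ((n : ℝ) + 1 / 2) ^ 2 * τ.im - 2 * π * ((n : ℝ) + 1 / 2) * z.im := by
      rw [show (π * I * (((n : ℝ) + 1 / 2 : ℝ) : ℂ) ^ 2 * τ
        + 2 * π * I * (((n : ℝ) + 1 / 2 : ℝ) : ℂ) * z) =
        ((π * ((n : ℝ) + 1 / 2) ^ 2 : ℝ) : ℂ) * τ * I
          + ((2 * π * ((n : ℝ) + 1 / 2) : ℝ) : ℂ) * z * I by push_cast; ring]
      rw [add_re, mul_I_re, mul_I_re, im_ofReal_mul, im_ofReal_mul]
      ring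
    rw [hre]
    have h1 : -(((n : ℝ) + 1 / 2) * z.im) ≤ (|(n : ℝ)| + 1 / 2) * S := by
      refine (neg_le_abs _).trans ?_
      rw [abs_mul]
      gcongr
    have h2 : T * ((n : ℝ) ^ 2 - |(n : ℝ)|) ≤ ((n : ℝ) + 1 / 2) ^ 2 * τ.im := by
      have h3 : (n : ℝ) ^ 2 - |(n : ℝ)| ≤ ((n : ℝ) + 1 / 2) ^ 2 := by
        nlinarith [neg_le_abs (n : ℝ)]
      calc T * ((n : ℝ) ^ 2 - |(n : ℝ)|) ≤ T * ((n : ℝ) + 1 / 2) ^ 2 := by gcongr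
        _ ≤ ((n : ℝ) + 1 / 2) ^ 2 * τ.im := by rw [mul_comm]; gcongr
    nlinarith [Real.pi_pos, mul_le_mul_of_nonneg_left h1 Real.pi_pos.le,
      mul_le_mul_of_nonneg_left h2 Real.pi_pos.le]

lemma summable_thetaTerm (k : ℕ) {τ : ℂ} (z : ℂ) (hτ : 0 < τ.im) :
    Summable (thetaTerm k τ z) :=
  (summable_thetaBound k |z.im| hτ).of_norm_bounded
    fun n => norm_thetaTerm_le k hτ le_rfl le_rfl n

lemma hasDerivAt_thetaD_z (k : ℕ) {τ : ℂ} (z : ℂ) (hτ : 0 < τ.im) :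
    HasDerivAt (thetaD k τ) (thetaD (k + 1) τ z) z := by
  have hz : z ∈ Metric.ball z 1 := Metric.mem_ball_self one_pos
  refine hasDerivAt_tsum_of_isPreconnected (g := fun n w => thetaTerm k τ w n)
    (g' := fun n w => thetaTerm (k + 1) τ w n)
    (summable_thetaBound (k + 1) (|z.im| + 1) hτ) Metric.isOpen_ball
    (convex_ball z 1).isPreconnected (fun n w _ => ?_) (fun n w hw => ?_) hz
    (summable_thetaTerm k z hτ) hz
  · have h := (((hasDerivAt_id w).const_mul (2 * π * I * ((n : ℂ) + 1 / 2))).const_add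
      (π * I * ((n : ℂ) + 1 / 2) ^ 2 * τ)).cexp.const_mul ((-1 : ℂ) ^ n)
    refine (h.const_mul ((2 * π * I * ((n : ℂ) + 1 / 2)) ^ k)).congr_deriv ?_
    simp only [thetaTerm, id, mul_one]
    ring
  · refine norm_thetaTerm_le (k + 1) hτ ?_ le_rfl n
    have h1 : |(w - z).im| ≤ ‖w - z‖ := Complex.abs_im_le_norm _
    rw [Metric.mem_ball, dist_eq_norm] at hw
    have h2 : w.im = z.im + (w - z).im := by simp
    rw [h2]
    exact (abs_add_le _ _).trans (by linarith)

/-- The heat equation `∂_τ = (4πi)⁻¹ ∂_z²` for all `z`-derivatives of `ϑ`. -/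
lemma hasDerivAt_thetaD_tau (k : ℕ) {τ : ℂ} (z : ℂ) (hτ : 0 < τ.im) :
    HasDerivAt (fun t => thetaD k t z) (thetaD (k + 2) τ z / (4 * π * I)) τ := by
  have hτ' : τ ∈ Metric.ball τ (τ.im / 2) := Metric.mem_ball_self (by positivity)
  have hπ : (π : ℂ) ≠ 0 := by exact_mod_cast Real.pi_ne_zero
  have hn : ‖(4 * π * I : ℂ)‖⁻¹ ≤ 1 := by
    have : ‖(4 * π * I : ℂ)‖ = 4 * π := by simp [abs_of_pos Real.pi_pos]
    rw [this]
    exact inv_le_one_of_one_le₀ (by nlinarith [Real.pi_gt_three])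
  rw [thetaD, ← tsum_div_const]
  refine hasDerivAt_tsum_of_isPreconnected (g := fun n t => thetaTerm k t z n)
    (g' := fun n t => thetaTerm (k + 2) t z n / (4 * π * I))
    (summable_thetaBound (k + 2) |z.im| (half_pos hτ)) Metric.isOpen_ball
    (convex_ball τ _).isPreconnected (fun n w _ => ?_) (fun n w hw => ?_) hτ'
    (summable_thetaTerm k z hτ) hτ'
  · have h := (((hasDerivAt_id w).const_mul (π * I * ((n : ℂ) + 1 / 2) ^ 2)).add_const
      (2 * π * I * ((n : ℂ) + 1 / 2) * z)).cexp.const_mul ((-1 : ℂ) ^ n)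
    refine (h.const_mul ((2 * π * I * ((n : ℂ) + 1 / 2)) ^ k)).congr_deriv ?_
    simp only [thetaTerm, id, mul_one]
    field_simp
    ring
  · have h1 : |(w - τ).im| ≤ ‖w - τ‖ := Complex.abs_im_le_norm _
    rw [Metric.mem_ball, dist_eq_norm] at hw
    have h2 : (w - τ).im = w.im - τ.im := by simp
    have h3 : τ.im / 2 ≤ w.im := by
      have := neg_le_of_abs_le (h1.trans hw.le)
      linarith
    rw [norm_div, div_eq_mul_inv]
    calc ‖thetaTerm (k + 2) w z n‖ * ‖(4 * π * I : ℂ)‖⁻¹ ≤ ‖thetaTerm (k + 2) w z n‖ * 1 := by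
          gcongr
      _ ≤ _ := by
          rw [mul_one]
          exact norm_thetaTerm_le (k + 2) (half_pos hτ) le_rfl h3 n

lemma thetaJ_eq_thetaD (τ z : ℂ) : thetaJ τ z = thetaD 0 τ z := by
  rw [thetaJ, thetaD, ← tsum_mul_left]
  refine tsum_congr fun n => ?_
  rw [thetaTerm, pow_zero, one_mul, ← Complex.exp_add]
  rw [show (π * I * ((n : ℂ) + 1 / 2) ^ 2 * τ + 2 * π * I * ((n : ℂ) + 1 / 2) * z) =
    (π * I * τ / 4 + π * I * z) + (π * I * τ * n * (n + 1)) + (2 * π * I * z * n) by ring,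
    Complex.exp_add _ (2 * π * I * z * n), Complex.exp_add _ (π * I * τ * n * (n + 1))]
  ring

lemma thetaD_neg (k : ℕ) (τ z : ℂ) : thetaD k τ (-z) = (-1) ^ (k + 1) * thetaD k τ z := by
  rw [thetaD, thetaD, ← tsum_mul_left, ← (Equiv.subLeft (-1 : ℤ)).tsum_eq]
  refine tsum_congr fun n => ?_
  have h1 : (((-1 - n : ℤ) : ℂ) + 1 / 2) = -((n : ℂ) + 1 / 2) := by push_cast; ring
  have h2 : (-1 : ℂ) ^ (-1 - n : ℤ) = -(-1 : ℂ) ^ n := by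
    rw [zpow_sub₀ (by norm_num), zpow_neg_one, div_eq_mul_inv, ← zpow_neg, ← inv_zpow']
    norm_num
  rw [Equiv.subLeft_apply, thetaTerm, thetaTerm, h1, h2, neg_sq, mul_neg, neg_pow]
  rw [show -(2 * π * I * ((n : ℂ) + 1 / 2)) * -z = 2 * π * I * ((n : ℂ) + 1 / 2) * z by ring]
  ring

lemma thetaD_even_zero {k : ℕ} (hk : Even k) (τ : ℂ) : thetaD k τ 0 = 0 := by
  have h := thetaD_neg k τ 0
  rw [neg_zero, pow_succ, hk.neg_one_pow] at h
  linear_combination h / 2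

/-! ### The addition formula and Hirota derivatives -/

/-- The even part `∑_{a even} q^{a²/4} ζ^a` of the index-one theta decomposition. -/
def evenTheta (τ z : ℂ) : ℂ := ∑' n : ℤ, cexp (2 * π * I * n ^ 2 * τ + 4 * π * I * n * z)

/-- The odd part `∑_{a odd} q^{a²/4} ζ^a` of the index-one theta decomposition. -/
def oddTheta (τ z : ℂ) : ℂ :=
  ∑' n : ℤ, cexp (2 * π * I * (n + 1 / 2) ^ 2 * τ + 4 * π * I * (n + 1 / 2) * z)

lemma evenTheta_term (τ z : ℂ) (n : ℤ) :
    cexp (2 * π * I * n ^ 2 * τ + 4 * π * I * n * z) = jacobiTheta₂_term n (2 * z) (2 * τ) := by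
  rw [jacobiTheta₂_term]
  ring_nf

lemma oddTheta_term (τ z : ℂ) (n : ℤ) :
    cexp (2 * π * I * (n + 1 / 2) ^ 2 * τ + 4 * π * I * (n + 1 / 2) * z) =
      cexp (π * I * τ / 2 + 2 * π * I * z) * jacobiTheta₂_term n (2 * z + τ) (2 * τ) := by
  rw [jacobiTheta₂_term, ← Complex.exp_add]
  ring_nf

lemma two_mul_im_pos {τ : ℂ} (hτ : 0 < τ.im) : 0 < (2 * τ).im := by
  simpa using hτ

lemma summable_evenTheta {τ : ℂ} (z : ℂ) (hτ : 0 < τ.im) :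
    Summable fun n : ℤ => cexp (2 * π * I * n ^ 2 * τ + 4 * π * I * n * z) := by
  simp_rw [evenTheta_term]
  exact (summable_jacobiTheta₂_term_iff _ _).2 (two_mul_im_pos hτ)

lemma summable_oddTheta {τ : ℂ} (z : ℂ) (hτ : 0 < τ.im) :
    Summable fun n : ℤ => cexp (2 * π * I * (n + 1 / 2) ^ 2 * τ + 4 * π * I * (n + 1 / 2) * z) := by
  simp_rw [oddTheta_term]
  exact ((summable_jacobiTheta₂_term_iff _ _).2 (two_mul_im_pos hτ)).mul_left _

lemma differentiable_evenTheta {τ : ℂ} (hτ : 0 < τ.im) : Differentiable ℂ (evenTheta τ) := by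
  have h : evenTheta τ = fun z => jacobiTheta₂ (2 * z) (2 * τ) := by
    ext z
    exact tsum_congr (evenTheta_term τ z)
  rw [h]
  intro z
  exact (differentiableAt_jacobiTheta₂_fst (2 * z) (two_mul_im_pos hτ)).comp z (by fun_prop)

lemma differentiable_oddTheta {τ : ℂ} (hτ : 0 < τ.im) : Differentiable ℂ (oddTheta τ) := by
  have h : oddTheta τ = fun z =>
      cexp (π * I * τ / 2 + 2 * π * I * z) * jacobiTheta₂ (2 * z + τ) (2 * τ) := by
    ext z
    rw [jacobiTheta₂, ← tsum_mul_left]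
    exact tsum_congr (oddTheta_term τ z)
  rw [h]
  intro z
  have h1 : DifferentiableAt ℂ (fun z => jacobiTheta₂ (2 * z + τ) (2 * τ)) z :=
    (differentiableAt_jacobiTheta₂_fst (2 * z + τ) (two_mul_im_pos hτ)).comp z
      (f := fun z => 2 * z + τ) (by fun_prop)
  exact DifferentiableAt.mul (by fun_prop) h1

/-- The change of lattice `(m, n) = (p + r, p - r)` or `(p + r + 1, p - r)`, according to the
parity of `m - n`. -/
def latticeSplit : (ℤ × ℤ) ⊕ (ℤ × ℤ) → ℤ × ℤ :=
  Sum.elim (fun x => (x.1 + x.2, x.1 - x.2)) (fun x => (x.1 + x.2 + 1, x.1 - x.2))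

lemma latticeSplit_bijective : Function.Bijective latticeSplit := by
  constructor
  · rintro (⟨a, b⟩ | ⟨a, b⟩) (⟨c, d⟩ | ⟨c, d⟩) h <;>
      simp only [latticeSplit, Sum.elim_inl, Sum.elim_inr, Prod.mk.injEq] at h
    · obtain ⟨rfl, rfl⟩ : a = c ∧ b = d := by omega
      rfl
    · omega
    · omega
    · obtain ⟨rfl, rfl⟩ : a = c ∧ b = d := by omega
      rfl
  · rintro ⟨m, n⟩
    rcases Int.even_or_odd' (m - n) with ⟨r, hr | hr⟩
    · refine ⟨Sum.inl (n + r, r), ?_⟩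
      simp only [latticeSplit, Sum.elim_inl, Prod.mk.injEq]
      omega
    · refine ⟨Sum.inr (n + r, r), ?_⟩
      simp only [latticeSplit, Sum.elim_inr, Prod.mk.injEq]
      omega

/-- The addition formula: `ϑ(z+u) ϑ(z-u)` has rank two as a kernel in `(z, u)`. -/
lemma theta_addition {τ : ℂ} (hτ : 0 < τ.im) (z u : ℂ) :
    thetaD 0 τ (z + u) * thetaD 0 τ (z - u) =
      oddTheta τ z * evenTheta τ u - evenTheta τ z * oddTheta τ u := by
  have hp := (summable_thetaTerm 0 (z + u) hτ).norm
  have hm := (summable_thetaTerm 0 (z - u) hτ).norm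
  have hsum := summable_mul_of_summable_norm hp hm
  have hsum' := (Equiv.ofBijective _ latticeSplit_bijective).summable_iff.2 hsum
  have hsq : ∀ p : ℤ, (-1 : ℂ) ^ p * (-1 : ℂ) ^ p = 1 := fun p => by
    rw [← mul_zpow]; norm_num
  have hinl : ∀ x : ℤ × ℤ, thetaTerm 0 τ (z + u) (x.1 + x.2) * thetaTerm 0 τ (z - u) (x.1 - x.2)
      = cexp (2 * π * I * (x.1 + 1 / 2) ^ 2 * τ + 4 * π * I * (x.1 + 1 / 2) * z) *
        cexp (2 * π * I * x.2 ^ 2 * τ + 4 * π * I * x.2 * u) := by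
    rintro ⟨p, r⟩
    have hs : (-1 : ℂ) ^ (p + r) * (-1 : ℂ) ^ (p - r) = 1 := by
      rw [← zpow_add₀ (by norm_num), show p + r + (p - r) = p + p by ring,
        zpow_add₀ (by norm_num), hsq]
    simp only [thetaTerm, pow_zero, one_mul]
    rw [mul_mul_mul_comm, hs, one_mul, ← Complex.exp_add, ← Complex.exp_add]
    push_cast
    ring_nf
  have hinr : ∀ x : ℤ × ℤ,
      thetaTerm 0 τ (z + u) (x.1 + x.2 + 1) * thetaTerm 0 τ (z - u) (x.1 - x.2)
      = -(cexp (2 * π * I * ((x.1 + 1 : ℤ) : ℂ) ^ 2 * τ + 4 * π * I * ((x.1 + 1 : ℤ) : ℂ) * z) *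
        cexp (2 * π * I * (x.2 + 1 / 2) ^ 2 * τ + 4 * π * I * (x.2 + 1 / 2) * u)) := by
    rintro ⟨p, r⟩
    have hs : (-1 : ℂ) ^ (p + r + 1) * (-1 : ℂ) ^ (p - r) = -1 := by
      rw [← zpow_add₀ (by norm_num), show p + r + 1 + (p - r) = p + p + 1 by ring,
        zpow_add₀ (by norm_num), zpow_add₀ (by norm_num), hsq]
      norm_num
    simp only [thetaTerm, pow_zero, one_mul]
    rw [mul_mul_mul_comm, hs, neg_one_mul, ← Complex.exp_add, ← Complex.exp_add]
    push_cast
    ring_nf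
  have hshift : evenTheta τ z = ∑' n : ℤ, cexp (2 * π * I * ((n + 1 : ℤ) : ℂ) ^ 2 * τ
      + 4 * π * I * ((n + 1 : ℤ) : ℂ) * z) :=
    ((Equiv.addRight (1 : ℤ)).tsum_eq
      (fun n : ℤ => cexp (2 * π * I * n ^ 2 * τ + 4 * π * I * n * z))).symm
  have hsh : Summable fun n : ℤ => cexp (2 * π * I * ((n + 1 : ℤ) : ℂ) ^ 2 * τ
      + 4 * π * I * ((n + 1 : ℤ) : ℂ) * z) :=
    (Equiv.addRight (1 : ℤ)).summable_iff.2 (summable_evenTheta z hτ)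
  rw [thetaD, thetaD, tsum_mul_tsum_of_summable_norm hp hm,
    ← (Equiv.ofBijective _ latticeSplit_bijective).tsum_eq, Summable.tsum_sum]
  · rw [hshift, oddTheta, evenTheta, oddTheta,
      tsum_mul_tsum_of_summable_norm (summable_oddTheta z hτ).norm (summable_evenTheta u hτ).norm,
      tsum_mul_tsum_of_summable_norm hsh.norm (summable_oddTheta u hτ).norm]
    refine (congrArg₂ (· + ·) (tsum_congr hinl) (tsum_congr hinr)).trans ?_
    rw [tsum_neg]
    exact (sub_eq_add_neg _ _).symm
  · exact hsum'.comp_injective Sum.inl_injective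
  · exact hsum'.comp_injective Sum.inr_injective

/-- All even Hirota derivatives `D_z^{2j} ϑ·ϑ` used below lie in the span of `evenTheta` and
`oddTheta`; their coefficients are the Taylor coefficients of these two functions at the origin. -/
lemma hirota_span {τ : ℂ} (hτ : 0 < τ.im) (z : ℂ) :
    2 * (thetaD 0 τ z * thetaD 2 τ z - thetaD 1 τ z ^ 2) =
        oddTheta τ z * iteratedDeriv 2 (evenTheta τ) 0
          - evenTheta τ z * iteratedDeriv 2 (oddTheta τ) 0 ∧
    2 * (thetaD 0 τ z * thetaD 4 τ z - 4 * thetaD 1 τ z * thetaD 3 τ z + 3 * thetaD 2 τ z ^ 2) =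
        oddTheta τ z * iteratedDeriv 4 (evenTheta τ) 0
          - evenTheta τ z * iteratedDeriv 4 (oddTheta τ) 0 := by
  have hp : ∀ k u, HasDerivAt (fun u => thetaD k τ (z + u)) (thetaD (k + 1) τ (z + u)) u :=
    fun k u => (hasDerivAt_thetaD_z k (z + u) hτ).comp_const_add z u
  have hm : ∀ k u, HasDerivAt (fun u => thetaD k τ (z - u)) (-thetaD (k + 1) τ (z - u)) u :=
    fun k u => (hasDerivAt_thetaD_z k (z - u) hτ).comp_const_sub z u
  have hmul : ∀ j k u, HasDerivAt (fun u => thetaD j τ (z + u) * thetaD k τ (z - u))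
      (thetaD (j + 1) τ (z + u) * thetaD k τ (z - u)
        - thetaD j τ (z + u) * thetaD (k + 1) τ (z - u)) u := fun j k u =>
    ((hp j u).mul (hm k u)).congr_deriv (by ring)
  set P : ℕ → ℕ → ℂ → ℂ := fun j k u => thetaD j τ (z + u) * thetaD k τ (z - u) with hP
  have hP' : ∀ j k u, HasDerivAt (P j k) (P (j + 1) k u - P j (k + 1) u) u := hmul
  have h1 : deriv (P 0 0) = fun u => P 1 0 u - P 0 1 u := by
    ext u
    exact (hP' 0 0 u).deriv
  have h2 : deriv (fun u => P 1 0 u - P 0 1 u) = fun u => P 2 0 u - 2 * P 1 1 u + P 0 2 u := by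
    ext u
    refine HasDerivAt.deriv (((hP' 1 0 u).sub (hP' 0 1 u)).congr_deriv ?_)
    ring
  have h3 : deriv (fun u => P 2 0 u - 2 * P 1 1 u + P 0 2 u) =
      fun u => P 3 0 u - 3 * P 2 1 u + 3 * P 1 2 u - P 0 3 u := by
    ext u
    refine HasDerivAt.deriv
      ((((hP' 2 0 u).sub ((hP' 1 1 u).const_mul 2)).add (hP' 0 2 u)).congr_deriv ?_)
    ring
  have h4 : deriv (fun u => P 3 0 u - 3 * P 2 1 u + 3 * P 1 2 u - P 0 3 u) =
      fun u => P 4 0 u - 4 * P 3 1 u + 6 * P 2 2 u - 4 * P 1 3 u + P 0 4 u := by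
    ext u
    refine HasDerivAt.deriv (((((hP' 3 0 u).sub ((hP' 2 1 u).const_mul 3)).add
      ((hP' 1 2 u).const_mul 3)).sub (hP' 0 3 u)).congr_deriv ?_)
    ring
  have hadd : P 0 0 = (fun u => oddTheta τ z * evenTheta τ u)
      - (fun u => evenTheta τ z * oddTheta τ u) := by
    ext u
    exact theta_addition hτ z u
  have hR : ∀ k : ℕ, iteratedDeriv k (P 0 0) 0 = oddTheta τ z * iteratedDeriv k (evenTheta τ) 0
      - evenTheta τ z * iteratedDeriv k (oddTheta τ) 0 := by
    intro k
    have ce : ContDiffAt ℂ k (evenTheta τ) 0 := (differentiable_evenTheta hτ).contDiff.contDiffAt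
    have co : ContDiffAt ℂ k (oddTheta τ) 0 := (differentiable_oddTheta hτ).contDiff.contDiffAt
    rw [hadd, iteratedDeriv_sub (contDiffAt_const.mul ce) (contDiffAt_const.mul co),
      iteratedDeriv_const_mul_field, iteratedDeriv_const_mul_field]
  have e2 : iteratedDeriv 2 (P 0 0) = fun u => P 2 0 u - 2 * P 1 1 u + P 0 2 u := by
    rw [iteratedDeriv_succ, iteratedDeriv_succ, iteratedDeriv_zero, h1, h2]
  have e4 : iteratedDeriv 4 (P 0 0) =
      fun u => P 4 0 u - 4 * P 3 1 u + 6 * P 2 2 u - 4 * P 1 3 u + P 0 4 u := by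
    rw [iteratedDeriv_succ, iteratedDeriv_succ, e2, h3, h4]
  constructor
  · rw [← hR, e2]
    simp only [hP, add_zero, sub_zero]
    ring
  · rw [← hR, e4]
    simp only [hP, add_zero, sub_zero]
    ring

/-- With `A = t₀t₂ - t₁²` and `F = t₀t₄ - 4t₁t₃ + 3t₂²`, where `tₖ = ∂_z^k ϑ`: if `F - eA` vanishes
at the origin, which is the condition `he`, then it is a constant multiple of `ϑ²`, since it is one
of the functions in the span of `evenTheta` and `oddTheta` that vanish there. -/
lemma hirota_dep {τ : ℂ} (hτ : 0 < τ.im) (h0 : thetaD 1 τ 0 ≠ 0) (e : ℂ)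
    (he : 4 * thetaD 3 τ 0 = e * thetaD 1 τ 0) :
    ∃ c : ℂ, ∀ z, thetaD 0 τ z * thetaD 4 τ z - 4 * thetaD 1 τ z * thetaD 3 τ z
      + 3 * thetaD 2 τ z ^ 2 - e * (thetaD 0 τ z * thetaD 2 τ z - thetaD 1 τ z ^ 2)
      = c * thetaD 0 τ z ^ 2 := by
  have hsq : ∀ z, thetaD 0 τ z ^ 2 =
      oddTheta τ z * evenTheta τ 0 - evenTheta τ z * oddTheta τ 0 := by
    intro z
    have h := theta_addition hτ z 0
    rw [add_zero, sub_zero] at h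
    rw [← h]
    ring
  have hz := hirota_span hτ 0
  have e0 : thetaD 0 τ 0 = 0 := thetaD_even_zero (by decide) τ
  have e2 : thetaD 2 τ 0 = 0 := thetaD_even_zero (by decide) τ
  rw [e0, e2] at hz
  obtain ⟨hz2, hz4⟩ := hz
  have hab : oddTheta τ 0 * (iteratedDeriv 4 (evenTheta τ) 0 - e * iteratedDeriv 2 (evenTheta τ) 0)
      = evenTheta τ 0 * (iteratedDeriv 4 (oddTheta τ) 0 - e * iteratedDeriv 2 (oddTheta τ) 0) := by
    linear_combination e * hz2 - hz4 - 2 * thetaD 1 τ 0 * he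
  by_cases hE : evenTheta τ 0 = 0
  · by_cases hO : oddTheta τ 0 = 0
    · exfalso
      have hv : thetaD 0 τ = fun _ => 0 := by
        ext z
        have := hsq z
        rw [hE, hO] at this
        simpa using this
      have hd := hasDerivAt_thetaD_z 0 0 hτ
      rw [hv] at hd
      exact h0 (hd.unique (hasDerivAt_const _ _))
    · refine ⟨(iteratedDeriv 4 (oddTheta τ) 0 - e * iteratedDeriv 2 (oddTheta τ) 0)
        / (2 * oddTheta τ 0), fun z => ?_⟩
      obtain ⟨h2, h4⟩ := hirota_span hτ z
      rw [hsq z]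
      field_simp
      linear_combination oddTheta τ 0 * h4 - e * oddTheta τ 0 * h2 + oddTheta τ z * hab
  · refine ⟨(iteratedDeriv 4 (evenTheta τ) 0 - e * iteratedDeriv 2 (evenTheta τ) 0)
      / (2 * evenTheta τ 0), fun z => ?_⟩
    obtain ⟨h2, h4⟩ := hirota_span hτ z
    rw [hsq z]
    field_simp
    linear_combination evenTheta τ 0 * h4 - e * evenTheta τ 0 * h2 + evenTheta τ z * hab

/-- The constant in `hirota_dep`, found by comparing second derivatives at the origin. -/
lemma hirota_const {τ : ℂ} (hτ : 0 < τ.im) {e c : ℂ}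
    (h : ∀ z, thetaD 0 τ z * thetaD 4 τ z - 4 * thetaD 1 τ z * thetaD 3 τ z
      + 3 * thetaD 2 τ z ^ 2 - e * (thetaD 0 τ z * thetaD 2 τ z - thetaD 1 τ z ^ 2)
      = c * thetaD 0 τ z ^ 2) :
    c * thetaD 1 τ 0 ^ 2 = thetaD 3 τ 0 ^ 2 - thetaD 1 τ 0 * thetaD 5 τ 0 := by
  have d := fun k z => hasDerivAt_thetaD_z k z hτ
  have h1 : ∀ z, thetaD 0 τ z * thetaD 5 τ z - 3 * thetaD 1 τ z * thetaD 4 τ z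
      + 2 * thetaD 2 τ z * thetaD 3 τ z - e * (thetaD 0 τ z * thetaD 3 τ z
        - thetaD 1 τ z * thetaD 2 τ z) = 2 * c * thetaD 0 τ z * thetaD 1 τ z := by
    intro z
    have hl := (((((d 0 z).mul (d 4 z)).sub (((d 1 z).const_mul 4).mul (d 3 z))).add
      (((d 2 z).pow 2).const_mul 3)).sub ((((d 0 z).mul (d 2 z)).sub ((d 1 z).pow 2)).const_mul e))
    have hr := ((d 0 z).pow 2).const_mul c
    have := (hl.congr_of_eventuallyEq (Filter.Eventually.of_forall fun w => (h w).symm)).unique hr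
    norm_num at this
    linear_combination this
  have hl := (((((d 0 0).mul (d 5 0)).sub (((d 1 0).const_mul 3).mul (d 4 0))).add
      (((d 2 0).const_mul 2).mul (d 3 0))).sub
      ((((d 0 0).mul (d 3 0)).sub ((d 1 0).mul (d 2 0))).const_mul e))
  have hr := ((d 0 0).const_mul (2 * c)).mul (d 1 0)
  have := (hl.congr_of_eventuallyEq (Filter.Eventually.of_forall fun w => (h1 w).symm)).unique hr
  have e0 : thetaD 0 τ 0 = 0 := thetaD_even_zero (by decide) τ
  have e2 : thetaD 2 τ 0 = 0 := thetaD_even_zero (by decide) τ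
  have e4 : thetaD 4 τ 0 = 0 := thetaD_even_zero (by decide) τ
  norm_num [e0, e2, e4] at this
  linear_combination -this / 2

/-! ### Level one cusp forms from their generating transformations -/

open UpperHalfPlane Filter Topology MatrixGroups ModularForm SlashInvariantForm in
/-- A holomorphic function on the upper half-plane, given as a function on `ℂ`, is a cusp form of
level one once it transforms correctly under `τ ↦ τ + 1` and `τ ↦ -1/τ` and tends to zero as
`Im τ → ∞`. -/
lemma exists_cuspForm (F : ℂ → ℂ) (k : ℕ)
    (hd : ∀ τ : ℂ, 0 < τ.im → DifferentiableAt ℂ F τ)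
    (hT : ∀ τ : ℂ, 0 < τ.im → F (τ + 1) = F τ)
    (hS : ∀ τ : ℂ, 0 < τ.im → F (-τ⁻¹) = τ ^ k * F τ)
    (h0 : Tendsto F (comap Complex.im atTop) (𝓝 0)) :
    ∃ f : CuspForm 𝒮ℒ k, ∀ τ : ℍ, f τ = F τ := by
  have hT' : ((fun τ : ℍ => F τ) ∣[(k : ℤ)] ModularGroup.T) = fun τ : ℍ => F τ := by
    ext z
    have hden : denom ((ModularGroup.T : SL(2, ℤ)) : GL (Fin 2) ℝ) z = 1 := by
      rw [ModularGroup.denom_apply]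
      simp [ModularGroup.T]
    rw [SL_slash_apply, modular_T_smul, hden, one_zpow, mul_one, coe_vadd, add_comm]
    simpa using hT z z.2
  have hS' : ((fun τ : ℍ => F τ) ∣[(k : ℤ)] ModularGroup.S) = fun τ : ℍ => F τ := by
    ext z
    have hz : (z : ℂ) ≠ 0 := z.ne_zero
    have h := hS z z.2
    rw [SL_slash_apply, modular_S_smul, ModularGroup.denom_S]
    simp only [inv_neg] at h ⊢
    rw [h, zpow_neg, zpow_natCast]
    field_simp
  have hz : IsZeroAtImInfty fun τ : ℍ => F τ := by
    refine h0.comp ?_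
    rw [tendsto_comap_iff]
    exact tendsto_comap
  exact ⟨{
    toFun := fun τ : ℍ => F τ
    slash_action_eq' := by
      intro A hA
      obtain ⟨A, rfl⟩ := hA
      exact slash_action_generators_SL2Z hS' hT' A
    holo' := by
      rw [UpperHalfPlane.mdifferentiable_iff]
      refine DifferentiableOn.congr (f := F)
        (fun τ hτ => (hd τ hτ).differentiableWithinAt) fun τ hτ => ?_
      simp [ofComplex_apply_of_im_pos hτ]
    zero_at_cusps' := by
      intro c hc
      rw [Subgroup.IsArithmetic.isCusp_iff_isCusp_SL2Z] at hc
      rw [OnePoint.isZeroAt_iff_forall_SL2Z hc]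
      intro γ _
      rw [slash_action_generators_SL2Z hS' hT']
      exact hz }, fun τ => rfl⟩

/-! ### The theta constant `∂_z ϑ(τ, 0)` -/

lemma thetaD_zero_eq_jacobiTheta₂ (τ z : ℂ) :
    thetaD 0 τ z = cexp (π * I * τ / 4 + π * I * z) * jacobiTheta₂ (z + τ / 2 + 1 / 2) τ := by
  rw [jacobiTheta₂, ← tsum_mul_left, thetaD]
  refine tsum_congr fun n => ?_
  have h : (-1 : ℂ) ^ n = cexp (n * (π * I)) := by
    rw [Complex.exp_int_mul, Complex.exp_pi_mul_I]
  rw [thetaTerm, jacobiTheta₂_term, pow_zero, one_mul, h, ← Complex.exp_add, ← Complex.exp_add]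
  ring_nf

/-- The transformation of `ϑ` under `τ ↦ -1/τ`. -/
lemma thetaD_zero_inversion {τ : ℂ} (hτ : 0 < τ.im) (z : ℂ) :
    thetaD 0 (-1 / τ) (z / τ) = cexp (-(π * I / 2)) * (-I * τ) ^ (1 / 2 : ℂ) *
      (cexp (π * I * z ^ 2 / τ) * thetaD 0 τ z) := by
  have hτ0 : τ ≠ 0 := by
    rintro rfl
    simp at hτ
  have hc : (-I * τ) ^ (1 / 2 : ℂ) ≠ 0 := by
    rw [Complex.cpow_ne_zero_iff]
    left
    simp [hτ0]
  have h1 := jacobiTheta₂_functional_equation (z + τ / 2 + 1 / 2) τ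
  have h2 := jacobiTheta₂_add_left' ((z + τ / 2 + 1 / 2) / τ) (-1 / τ)
  rw [thetaD_zero_eq_jacobiTheta₂, thetaD_zero_eq_jacobiTheta₂ τ z, h1,
    show z / τ + -1 / τ / 2 + 1 / 2 = (z + τ / 2 + 1 / 2) / τ + -1 / τ by field_simp; ring, h2]
  generalize jacobiTheta₂ ((z + τ / 2 + 1 / 2) / τ) (-1 / τ) = X
  have h3 : cexp (π * I * (-1 / τ) / 4 + π * I * (z / τ)) *
      cexp (-π * I * (-1 / τ + 2 * ((z + τ / 2 + 1 / 2) / τ))) =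
      cexp (-(π * I / 2)) * cexp (π * I * z ^ 2 / τ) * cexp (π * I * τ / 4 + π * I * z) *
        cexp (-π * I * (z + τ / 2 + 1 / 2) ^ 2 / τ) := by
    rw [← Complex.exp_add, ← Complex.exp_add, ← Complex.exp_add, ← Complex.exp_add]
    congr 1
    field_simp
    ring
  have h4 := mul_one_div_cancel hc
  generalize (-I * τ) ^ (1 / 2 : ℂ) = r at h4 ⊢
  linear_combination X * h3 - X * cexp (-(π * I / 2)) * cexp (π * I * z ^ 2 / τ) *
    cexp (π * I * τ / 4 + π * I * z) * cexp (-π * I * (z + τ / 2 + 1 / 2) ^ 2 / τ) * h4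

/-- The eighth power of the theta constant transforms with weight twelve. -/
lemma thetaConst_inversion {τ : ℂ} (hτ : 0 < τ.im) :
    thetaD 1 (-τ⁻¹) 0 ^ 8 = τ ^ 12 * thetaD 1 τ 0 ^ 8 := by
  have hτ0 : τ ≠ 0 := by
    rintro rfl
    simp at hτ
  have him : 0 < (-1 / τ).im := by
    have := UpperHalfPlane.im_inv_neg_coe_pos ⟨τ, hτ⟩
    rwa [show -1 / τ = (-τ)⁻¹ by rw [inv_neg, neg_div, one_div]]
  have e0 : thetaD 0 τ 0 = 0 := thetaD_even_zero (by decide) τ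
  have hl : HasDerivAt (fun z => thetaD 0 (-1 / τ) (z / τ)) (thetaD 1 (-1 / τ) 0 * (1 / τ)) 0 := by
    have h := hasDerivAt_thetaD_z 0 (0 / τ) him
    refine (h.comp (0 : ℂ) ((hasDerivAt_id (0 : ℂ)).div_const τ)).congr_deriv ?_
    rw [zero_div]
  have hr : HasDerivAt (fun z => cexp (-(π * I / 2)) * (-I * τ) ^ (1 / 2 : ℂ) *
      (cexp (π * I * z ^ 2 / τ) * thetaD 0 τ z))
      (cexp (-(π * I / 2)) * (-I * τ) ^ (1 / 2 : ℂ) * thetaD 1 τ 0) 0 := by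
    have he : DifferentiableAt ℂ (fun z : ℂ => cexp (π * I * z ^ 2 / τ)) 0 := by fun_prop
    have h := (he.hasDerivAt.mul (hasDerivAt_thetaD_z 0 0 hτ)).const_mul
      (cexp (-(π * I / 2)) * (-I * τ) ^ (1 / 2 : ℂ))
    refine h.congr_deriv ?_
    simp [e0]
  have hEq := hl.unique (hr.congr_of_eventuallyEq
    (Filter.Eventually.of_forall fun z => thetaD_zero_inversion hτ z))
  have hsq : ((-I * τ) ^ (1 / 2 : ℂ)) ^ 2 = -I * τ := by
    rw [← Complex.cpow_nat_mul]
    norm_num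
  have hexp : cexp (-(π * I / 2)) ^ 8 = 1 := by
    rw [← Complex.exp_nat_mul, Complex.exp_eq_one_iff]
    exact ⟨-2, by push_cast; ring⟩
  have hI : (-I * τ) ^ 4 = τ ^ 4 := by
    rw [mul_pow, neg_pow, Complex.I_pow_four]
    norm_num
  have h8 : (thetaD 1 (-1 / τ) 0 * (1 / τ)) ^ 8 = τ ^ 4 * thetaD 1 τ 0 ^ 8 := by
    rw [hEq, mul_pow, mul_pow, hexp, show 8 = 2 * 4 by norm_num, pow_mul _ 2 4, hsq, hI, one_mul]
  have hnorm : -τ⁻¹ = -1 / τ := by rw [neg_div, one_div]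
  rw [hnorm]
  rw [mul_pow] at h8
  have h9 : (1 / τ) ^ 8 * τ ^ 8 = 1 := by
    rw [← mul_pow, one_div, inv_mul_cancel₀ hτ0, one_pow]
  linear_combination τ ^ 8 * h8 - thetaD 1 (-1 / τ) 0 ^ 8 * h9

lemma thetaConst_translation (τ : ℂ) : thetaD 1 (τ + 1) 0 ^ 8 = thetaD 1 τ 0 ^ 8 := by
  have h : thetaD 1 (τ + 1) 0 = cexp (π * I / 4) * thetaD 1 τ 0 := by
    rw [thetaD, thetaD, ← tsum_mul_left]
    refine tsum_congr fun n => ?_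
    obtain ⟨m, hm⟩ := Int.even_mul_succ_self n
    have hm' : (n : ℂ) * (n + 1) = m + m := by exact_mod_cast hm
    have h1 : cexp (π * I * ((n : ℂ) + 1 / 2) ^ 2 * (τ + 1) + 2 * π * I * ((n : ℂ) + 1 / 2) * 0) =
        cexp (π * I / 4) * cexp (π * I * ((n : ℂ) + 1 / 2) ^ 2 * τ
          + 2 * π * I * ((n : ℂ) + 1 / 2) * 0) := by
      rw [← Complex.exp_add, Complex.exp_eq_exp_iff_exists_int]
      exact ⟨m, by linear_combination π * I * hm'⟩
    rw [thetaTerm, thetaTerm, h1]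
    ring
  have hexp : cexp (π * I / 4) ^ 8 = 1 := by
    rw [← Complex.exp_nat_mul, Complex.exp_eq_one_iff]
    exact ⟨1, by push_cast; ring⟩
  rw [h, mul_pow, hexp, one_mul]

open Filter Topology in
lemma tendsto_cexp_im_atTop {a : ℝ} (ha : 0 < a) :
    Tendsto (fun τ : ℂ => cexp (a * I * τ)) (comap Complex.im atTop) (𝓝 0) := by
  rw [tendsto_zero_iff_norm_tendsto_zero]
  have h : (fun τ : ℂ => ‖cexp (a * I * τ)‖) = fun τ : ℂ => rexp (-(a * τ.im)) := by
    ext τ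
    rw [Complex.norm_exp]
    simp
  rw [h]
  exact Real.tendsto_exp_neg_atTop_nhds_zero.comp (tendsto_comap.const_mul_atTop ha)

open Filter Topology in
/-- The leading term of the theta constant at the cusp, contributed by `n = 0` and `n = -1`. -/
lemma tendsto_thetaConst :
    Tendsto (fun τ => thetaD 1 τ 0 * cexp (-(π * I * τ / 4))) (comap Complex.im atTop)
      (𝓝 (2 * π * I)) := by
  have hlim : ∑' n : ℤ, (if n = 0 ∨ n = -1 then (π * I : ℂ) else 0) = 2 * π * I := by
    rw [tsum_eq_sum (s := {0, -1})]
    · rw [Finset.sum_insert (by decide), Finset.sum_singleton]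
      norm_num
      ring
    · intro n hn
      rw [if_neg]
      simpa using hn
  have hterm : ∀ (τ : ℂ) (n : ℤ), thetaTerm 1 τ 0 n * cexp (-(π * I * τ / 4)) =
      2 * π * I * (n + 1 / 2) * (-1 : ℂ) ^ n * cexp ((π * (n * (n + 1) : ℤ) : ℝ) * I * τ) := by
    intro τ n
    rw [thetaTerm, pow_one, mul_assoc, mul_assoc ((-1 : ℂ) ^ n), ← Complex.exp_add,
      mul_assoc _ ((-1 : ℂ) ^ n)]
    congr 3
    push_cast
    ring
  have hnn : ∀ n : ℤ, 0 ≤ n * (n + 1) := fun n => by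
    rcases le_or_gt 0 n with h | h
    · positivity
    · nlinarith
  have hf : (fun τ => thetaD 1 τ 0 * cexp (-(π * I * τ / 4))) =
      fun τ => ∑' n : ℤ, thetaTerm 1 τ 0 n * cexp (-(π * I * τ / 4)) := by
    ext τ
    rw [thetaD, tsum_mul_right]
  rw [hf, ← hlim]
  refine tendsto_tsum_of_dominated_convergence
    (bound := fun n => ‖thetaTerm 1 I 0 n * cexp (-(π * I * I / 4))‖)
    ((summable_thetaTerm 1 0 (by simp)).mul_right _).norm (fun n => ?_) ?_
  · simp_rw [hterm]
    split_ifs with h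
    · refine Tendsto.congr (fun τ => ?_) tendsto_const_nhds
      rcases h with rfl | rfl
      · norm_num
        ring
      · norm_num
        ring
    · have hpos : (0 : ℝ) < π * (n * (n + 1) : ℤ) := by
        have h0 : n * (n + 1) ≠ 0 := by
          rw [Ne, mul_eq_zero]
          omega
        have h1 : 0 < n * (n + 1) := lt_of_le_of_ne (hnn n) h0.symm
        have h2 : (0 : ℝ) < (n * (n + 1) : ℤ) := by exact_mod_cast h1
        positivity
      have := (tendsto_cexp_im_atTop hpos).const_mul (2 * π * I * (n + 1 / 2) * (-1 : ℂ) ^ n)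
      rwa [mul_zero] at this
  · have hev : ∀ᶠ τ : ℂ in comap Complex.im atTop, 1 ≤ τ.im :=
      tendsto_comap.eventually (eventually_ge_atTop 1)
    filter_upwards [hev] with τ hτ n
    rw [hterm, hterm, norm_mul, norm_mul _ (cexp _), Complex.norm_exp, Complex.norm_exp]
    refine mul_le_mul_of_nonneg_left ?_ (norm_nonneg _)
    rw [Real.exp_le_exp]
    have h2 : (0 : ℝ) ≤ π * (n * (n + 1) : ℤ) := by
      have : (0 : ℝ) ≤ (n * (n + 1) : ℤ) := by exact_mod_cast hnn n
      positivity
    have hre : ∀ (a : ℝ) (w : ℂ), ((a : ℂ) * I * w).re = -(a * w.im) := fun a w => by simp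
    rw [hre, hre, neg_le_neg_iff, Complex.I_im]
    exact mul_le_mul_of_nonneg_left hτ h2

open Filter Topology in
instance neBot_comap_im_atTop : (comap Complex.im atTop).NeBot :=
  atTop_neBot.comap_of_surj Complex.im_surjective

open Filter Topology MatrixGroups in
/-- The theta constant to the eighth power is a nonzero multiple of the discriminant. -/
lemma exists_thetaConst_eq_eta :
    ∃ c : ℂ, c ≠ 0 ∧ ∀ τ : ℂ, 0 < τ.im → thetaD 1 τ 0 ^ 8 = c * ModularForm.eta τ ^ 24 := by
  have hzero : Tendsto (fun τ => thetaD 1 τ 0 ^ 8) (comap Complex.im atTop) (𝓝 0) := by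
    have h := (tendsto_thetaConst.pow 8).mul (tendsto_cexp_im_atTop Real.two_pi_pos)
    rw [mul_zero] at h
    refine h.congr fun τ => ?_
    rw [mul_pow, mul_assoc, ← Complex.exp_nat_mul, ← Complex.exp_add]
    rw [show ((8 : ℕ) : ℂ) * -(π * I * τ / 4) + ((2 * π : ℝ) : ℂ) * I * τ = 0 by push_cast; ring,
      Complex.exp_zero, mul_one]
  obtain ⟨f, hf⟩ := exists_cuspForm (fun τ => thetaD 1 τ 0 ^ 8) 12
    (fun τ hτ => (hasDerivAt_thetaD_tau 1 0 hτ).differentiableAt.pow 8)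
    (fun τ _ => thetaConst_translation τ) (fun τ hτ => thetaConst_inversion hτ) hzero
  obtain ⟨c, hc⟩ := CuspForm.exists_smul_discriminant_of_weight_eq_twelve f
  have heq : ∀ τ : ℂ, 0 < τ.im → thetaD 1 τ 0 ^ 8 = c * ModularForm.eta τ ^ 24 := by
    intro τ hτ
    rw [← hf ⟨τ, hτ⟩, ← hc]
    rfl
  refine ⟨c, ?_, heq⟩
  rintro rfl
  have hev : ∀ᶠ τ : ℂ in comap Complex.im atTop, 0 < τ.im :=
    tendsto_comap.eventually (eventually_gt_atTop 0)
  have h0 : Tendsto (fun τ => thetaD 1 τ 0 * cexp (-(π * I * τ / 4))) (comap Complex.im atTop)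
      (𝓝 0) := by
    refine Tendsto.congr' ?_ tendsto_const_nhds
    filter_upwards [hev] with τ hτ
    have h := heq τ hτ
    rw [zero_mul] at h
    rw [pow_eq_zero_iff (by norm_num)] at h
    rw [h, zero_mul]
  have := tendsto_nhds_unique h0 tendsto_thetaConst
  exact Complex.two_pi_I_ne_zero this.symm

lemma thetaConst_ne_zero {τ : ℂ} (hτ : 0 < τ.im) : thetaD 1 τ 0 ≠ 0 := by
  obtain ⟨c, hc, h⟩ := exists_thetaConst_eq_eta
  intro h0
  have h1 := h τ hτ
  rw [h0, zero_pow (by norm_num)] at h1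
  exact mul_ne_zero hc (pow_ne_zero _ (ModularForm.eta_ne_zero hτ)) h1.symm

lemma hasDerivAt_eta {τ : ℂ} (hτ : 0 < τ.im) : HasDerivAt ModularForm.eta
    (π * I / 12 * EisensteinSeries.E2 ⟨τ, hτ⟩ * ModularForm.eta τ) τ := by
  have h := ModularForm.logDeriv_eta_eq_E2 ⟨τ, hτ⟩
  have hd := (ModularForm.differentiableAt_eta_of_mem_upperHalfPlaneSet hτ).hasDerivAt
  refine hd.congr_deriv ?_
  rw [← h, logDeriv_apply]
  exact (div_mul_cancel₀ _ (ModularForm.eta_ne_zero hτ)).symm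

/-- The logarithmic derivative of the theta constant, in terms of `E₂`. -/
lemma thetaD_three_zero {τ : ℂ} (hτ : 0 < τ.im) :
    thetaD 3 τ 0 = -π ^ 2 * EisensteinSeries.E2 ⟨τ, hτ⟩ * thetaD 1 τ 0 := by
  obtain ⟨c, hc, h⟩ := exists_thetaConst_eq_eta
  have h0 := thetaConst_ne_zero hτ
  have hπ : (π : ℂ) ≠ 0 := by exact_mod_cast Real.pi_ne_zero
  have hl := (hasDerivAt_thetaD_tau 1 0 hτ).pow 8
  have hr := ((hasDerivAt_eta hτ).pow 24).const_mul c
  have hev : (fun t => thetaD 1 t 0 ^ 8) =ᶠ[nhds τ] fun t => c * ModularForm.eta t ^ 24 := by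
    filter_upwards [UpperHalfPlane.isOpen_upperHalfPlaneSet.mem_nhds hτ] with t ht
    exact h t ht
  have hu := hl.unique (hr.congr_of_eventuallyEq hev)
  have hv := h τ hτ
  norm_num at hu
  have h7 : thetaD 1 τ 0 ^ 7 ≠ 0 := pow_ne_zero _ h0
  refine mul_left_cancel₀ h7 ?_
  field_simp at hu
  linear_combination hu / 96 + π ^ 2 * EisensteinSeries.E2 ⟨τ, hτ⟩ * hv
    + π ^ 2 * c * ModularForm.eta τ ^ 24 * EisensteinSeries.E2 ⟨τ, hτ⟩ * Complex.I_sq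

/-! ### The Eisenstein series and the eta function -/

lemma etaD_eq_eta (τ : ℂ) : etaD τ = ModularForm.eta τ := by
  rw [etaD, ModularForm.eta, Function.Periodic.qParam]
  congr 1
  · congr 1
    push_cast
    ring
  · refine tprod_congr fun n => ?_
    rw [ModularForm.eta_q_eq_cexp]
    ring_nf

/-- The series `∑_{n ≥ 1} σ_k(n) q^n`. -/
def sigmaSeries (k : ℕ) (τ : ℂ) : ℂ :=
  ∑' n : ℕ, (sigmaD k (n + 1) : ℂ) * cexp (2 * π * I * τ * (n + 1))

lemma sigmaSeries_eq_tsum_pnat (k : ℕ) (τ : ℂ) : sigmaSeries k τ =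
    ∑' n : ℕ+, (ArithmeticFunction.sigma k n : ℂ) * cexp (2 * π * I * τ) ^ (n : ℕ) := by
  rw [tsum_pnat_eq_tsum_succ
    (f := fun n : ℕ => (ArithmeticFunction.sigma k n : ℂ) * cexp (2 * π * I * τ) ^ n), sigmaSeries]
  refine tsum_congr fun n => ?_
  rw [ArithmeticFunction.sigma_apply, sigmaD, ← Complex.exp_nat_mul]
  push_cast
  ring_nf

lemma Eis2_eq_E2 {τ : ℂ} (hτ : 0 < τ.im) : Eis2 τ = EisensteinSeries.E2 ⟨τ, hτ⟩ := by
  rw [EisensteinSeries.E2_eq_tsum_cexp, ← sigmaSeries_eq_tsum_pnat]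
  rfl

lemma Eis4_eq_E₄ {τ : ℂ} (hτ : 0 < τ.im) : Eis4 τ = ModularForm.E₄ ⟨τ, hτ⟩ := by
  have hb : bernoulli 4 = -1 / 30 := by decide +kernel
  rw [ModularForm.E₄, EisensteinSeries.q_expansion_bernoulli _ (by decide), hb]
  simp only [zpow_natCast]
  rw [← sigmaSeries_eq_tsum_pnat, Eis4, sigmaSeries]
  push_cast
  ring

open Filter Topology in
lemma tendsto_sigmaSeries (k : ℕ) :
    Tendsto (sigmaSeries k) (comap Complex.im atTop) (𝓝 0) := by
  have hz : ∑' _ : ℕ, (0 : ℂ) = 0 := tsum_zero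
  have hsum : Summable fun n : ℕ => (sigmaD k (n + 1) : ℂ) * cexp (2 * π * I * I * (n + 1)) := by
    have h := (summable_nat_add_iff 1).mpr
      (EisensteinSeries.summable_sigma_mul_cexp_pow (k := k + 1) (by omega) UpperHalfPlane.I)
    refine h.congr fun n => ?_
    rw [Nat.add_sub_cancel, ArithmeticFunction.sigma_apply, sigmaD, ← Complex.exp_nat_mul,
      UpperHalfPlane.coe_I]
    push_cast
    ring_nf
  have hre : ∀ (a : ℝ) (w : ℂ), ((a : ℂ) * I * w).re = -(a * w.im) := fun a w => by simp
  have hcast : ∀ (n : ℕ) (τ : ℂ),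
      2 * π * I * τ * (n + 1) = ((2 * π * (n + 1) : ℝ) : ℂ) * I * τ := fun n τ => by
    push_cast
    ring
  have hpos : ∀ n : ℕ, 0 < 2 * π * ((n : ℝ) + 1) := fun n => by positivity
  rw [← hz]
  refine tendsto_tsum_of_dominated_convergence hsum.norm (fun n => ?_) ?_
  · have h := (tendsto_cexp_im_atTop (hpos n)).const_mul (sigmaD k (n + 1) : ℂ)
    rw [mul_zero] at h
    refine h.congr fun τ => ?_
    rw [hcast]
  · have hev : ∀ᶠ τ : ℂ in comap Complex.im atTop, 1 ≤ τ.im :=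
      tendsto_comap.eventually (eventually_ge_atTop 1)
    filter_upwards [hev] with τ hτ n
    rw [norm_mul, norm_mul _ (cexp _), hcast, hcast, Complex.norm_exp, Complex.norm_exp, hre, hre]
    refine mul_le_mul_of_nonneg_left ?_ (norm_nonneg _)
    rw [Real.exp_le_exp, neg_le_neg_iff, Complex.I_im]
    exact mul_le_mul_of_nonneg_left hτ (hpos n).le

lemma sigmaSeries_add_one (k : ℕ) (τ : ℂ) : sigmaSeries k (τ + 1) = sigmaSeries k τ := by
  refine tsum_congr fun n => ?_
  congr 1
  rw [Complex.exp_eq_exp_iff_exists_int]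
  exact ⟨n + 1, by push_cast; ring⟩

lemma Eis2_add_one (τ : ℂ) : Eis2 (τ + 1) = Eis2 τ :=
  congrArg (fun x => 1 - 24 * x) (sigmaSeries_add_one 1 τ)

lemma Eis4_add_one (τ : ℂ) : Eis4 (τ + 1) = Eis4 τ :=
  congrArg (fun x => 1 + 240 * x) (sigmaSeries_add_one 3 τ)

open Filter Topology in
lemma tendsto_Eis2 : Tendsto Eis2 (comap Complex.im atTop) (𝓝 1) := by
  have h := ((tendsto_sigmaSeries 1).const_mul 24).const_sub 1
  rw [mul_zero, sub_zero] at h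
  exact h

open Filter Topology in
lemma tendsto_Eis4 : Tendsto Eis4 (comap Complex.im atTop) (𝓝 1) := by
  have h := ((tendsto_sigmaSeries 3).const_mul 240).const_add 1
  rw [mul_zero, add_zero] at h
  exact h

open UpperHalfPlane in
/-- A function on `ℂ` agreeing on `ℍ` with a holomorphic function on `ℍ` is holomorphic there. -/
lemma differentiableOn_of_eq_mdifferentiable {F : ℂ → ℂ} {f : ℍ → ℂ}
    (hf : DifferentiableOn ℂ (f ∘ ofComplex) upperHalfPlaneSet)
    (h : ∀ τ (hτ : 0 < τ.im), F τ = f ⟨τ, hτ⟩) : DifferentiableOn ℂ F upperHalfPlaneSet := by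
  refine hf.congr fun τ hτ => ?_
  rw [Function.comp_apply, ofComplex_apply_of_im_pos hτ, h τ hτ]

open UpperHalfPlane in
lemma differentiableOn_Eis2 : DifferentiableOn ℂ Eis2 upperHalfPlaneSet :=
  differentiableOn_of_eq_mdifferentiable
    (UpperHalfPlane.mdifferentiable_iff.mp E2_mdifferentiable) fun _ hτ => Eis2_eq_E2 hτ

open UpperHalfPlane in
lemma differentiableOn_Eis4 : DifferentiableOn ℂ Eis4 upperHalfPlaneSet :=
  differentiableOn_of_eq_mdifferentiable
    (UpperHalfPlane.mdifferentiable_iff.mp ModularForm.E₄.holo') fun _ hτ => Eis4_eq_E₄ hτ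

lemma hasDerivAt_Eis2 {τ : ℂ} (hτ : 0 < τ.im) : HasDerivAt Eis2 (deriv Eis2 τ) τ :=
  (differentiableOn_Eis2.differentiableAt
    (UpperHalfPlane.isOpen_upperHalfPlaneSet.mem_nhds hτ)).hasDerivAt

lemma neg_inv_im_pos {τ : ℂ} (hτ : 0 < τ.im) : 0 < (-τ⁻¹).im := by
  have := UpperHalfPlane.im_inv_neg_coe_pos ⟨τ, hτ⟩
  rwa [← inv_neg]

lemma Eis2_inversion {τ : ℂ} (hτ : 0 < τ.im) :
    Eis2 (-τ⁻¹) = τ ^ 2 * Eis2 τ - 6 * I * τ / π := by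
  have hτ0 : τ ≠ 0 := UpperHalfPlane.ne_zero ⟨τ, hτ⟩
  have hπ : (π : ℂ) ≠ 0 := by exact_mod_cast Real.pi_ne_zero
  have h := congrFun (EisensteinSeries.E2_slash_action ModularGroup.S) ⟨τ, hτ⟩
  rw [ModularForm.SL_slash_apply, UpperHalfPlane.modular_S_smul, ModularGroup.denom_S,
    Pi.sub_apply, Pi.smul_apply, EisensteinSeries.D2_S, riemannZeta_two, ← Eis2_eq_E2 hτ] at h
  have h2 : EisensteinSeries.E2 ⟨(-τ)⁻¹, UpperHalfPlane.im_inv_neg_coe_pos ⟨τ, hτ⟩⟩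
      = Eis2 (-τ⁻¹) := by
    rw [← inv_neg, Eis2_eq_E2]
  rw [smul_eq_mul] at h
  rw [h2] at h
  have h3 : Eis2 (-τ⁻¹) = τ ^ 2 * (Eis2 (-τ⁻¹) * τ ^ (-2 : ℤ)) := by
    rw [zpow_neg]
    norm_cast
    field_simp
  rw [h3]
  refine (congrArg (τ ^ 2 * ·) h).trans ?_
  field_simp

lemma Eis4_inversion {τ : ℂ} (hτ : 0 < τ.im) : Eis4 (-τ⁻¹) = τ ^ 4 * Eis4 τ := by
  have hτ0 : τ ≠ 0 := UpperHalfPlane.ne_zero ⟨τ, hτ⟩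
  have h := congrFun (ModularForm.E₄.slash_action_eq' _ ⟨ModularGroup.S, rfl⟩) ⟨τ, hτ⟩
  have h' := (ModularForm.SL_slash_apply _ ModularGroup.S ⟨τ, hτ⟩).symm.trans h
  rw [UpperHalfPlane.modular_S_smul, ModularGroup.denom_S] at h'
  have h2 : ModularForm.E₄ ⟨(-τ)⁻¹, UpperHalfPlane.im_inv_neg_coe_pos ⟨τ, hτ⟩⟩
      = Eis4 (-τ⁻¹) := by
    rw [← inv_neg, Eis4_eq_E₄]
  have h3 : Eis4 (-τ⁻¹) * τ ^ (-4 : ℤ) = Eis4 τ := by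
    rw [← h2, Eis4_eq_E₄ hτ]
    exact h'
  rw [← h3, zpow_neg]
  norm_cast
  field_simp

/-! ### Ramanujan's differential equation for `E₂` -/

lemma deriv_Eis2_inversion {τ : ℂ} (hτ : 0 < τ.im) :
    deriv Eis2 (-τ⁻¹) = τ ^ 4 * deriv Eis2 τ + 2 * τ ^ 3 * Eis2 τ - 6 * I * τ ^ 2 / π := by
  have hτ0 : τ ≠ 0 := UpperHalfPlane.ne_zero ⟨τ, hτ⟩
  have hl := (hasDerivAt_Eis2 (neg_inv_im_pos hτ)).comp τ (hasDerivAt_inv hτ0).neg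
  have hr := (((hasDerivAt_id τ).pow 2).mul (hasDerivAt_Eis2 hτ)).sub
    (((hasDerivAt_id τ).const_mul (6 * I)).div_const (π : ℂ))
  have hev : (Eis2 ∘ fun t => -t⁻¹) =ᶠ[nhds τ] fun t => t ^ 2 * Eis2 t - 6 * I * t / π := by
    filter_upwards [UpperHalfPlane.isOpen_upperHalfPlaneSet.mem_nhds hτ] with t ht
    exact Eis2_inversion ht
  have h := hl.unique (hr.congr_of_eventuallyEq hev)
  simp only [id, Pi.pow_apply, Nat.cast_ofNat, mul_one] at h
  have h4 : (τ ^ 2)⁻¹ * τ ^ 2 = 1 := inv_mul_cancel₀ (pow_ne_zero 2 hτ0)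
  norm_num at h
  linear_combination τ ^ 2 * h - deriv Eis2 (-τ⁻¹) * h4

lemma deriv_Eis2_add_one (τ : ℂ) : deriv Eis2 (τ + 1) = deriv Eis2 τ := by
  rw [← deriv_comp_add_const]
  congr 1
  ext t
  exact Eis2_add_one t

open Filter Topology in
/-- By Cauchy's estimate on discs of radius one. -/
lemma tendsto_deriv_Eis2 : Tendsto (deriv Eis2) (comap Complex.im atTop) (𝓝 0) := by
  rw [Metric.tendsto_nhds]
  intro ε hε
  have h1 := (Metric.tendsto_nhds.mp tendsto_Eis2) (ε / 2) (half_pos hε)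
  rw [eventually_comap, eventually_atTop] at h1
  obtain ⟨A, hA⟩ := h1
  have hev : ∀ᶠ τ : ℂ in comap Complex.im atTop, max A 0 + 2 ≤ τ.im :=
    tendsto_comap.eventually (eventually_ge_atTop _)
  filter_upwards [hev] with τ hτ
  have him : ∀ w ∈ Metric.closedBall τ 1, max A 0 < w.im := by
    intro w hw
    rw [Metric.mem_closedBall, dist_eq_norm] at hw
    have h2 := neg_le_of_abs_le ((Complex.abs_im_le_norm (w - τ)).trans hw)
    rw [Complex.sub_im] at h2
    linarith
  have hd : DifferentiableOn ℂ (fun w => Eis2 w - 1) (Metric.closedBall τ 1) := fun w hw =>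
    ((hasDerivAt_Eis2 ((le_max_right A 0).trans_lt (him w hw))).differentiableAt.sub_const
      1).differentiableWithinAt
  have hb := Complex.norm_deriv_le_of_forall_mem_sphere_norm_le (C := ε / 2) one_pos
    (hd.diffContOnCl_ball subset_rfl) fun w hw => by
      have h3 := hA w.im ((le_max_left A 0).trans (him w (Metric.sphere_subset_closedBall hw)).le)
        w rfl
      rw [dist_eq_norm] at h3
      exact h3.le
  rw [deriv_sub_const, div_one] at hb
  rw [dist_zero_right]
  linarith

open Filter Topology in
/-- Ramanujan's identity `E₂' = (2πi/12) (E₂² - E₄)`: the difference of both sides is a cusp form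
of weight four and level one, hence zero. -/
lemma ramanujan_Eis2 {τ : ℂ} (hτ : 0 < τ.im) :
    12 * deriv Eis2 τ = 2 * π * I * (Eis2 τ ^ 2 - Eis4 τ) := by
  have hπ : (π : ℂ) ≠ 0 := by exact_mod_cast Real.pi_ne_zero
  have hI := Complex.I_sq
  obtain ⟨f, hf⟩ := exists_cuspForm
    (fun τ => 12 * deriv Eis2 τ - 2 * π * I * (Eis2 τ ^ 2 - Eis4 τ)) 4
    (fun τ hτ => by
      have hn := UpperHalfPlane.isOpen_upperHalfPlaneSet.mem_nhds hτ
      have h1 := (differentiableOn_Eis2.deriv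
        UpperHalfPlane.isOpen_upperHalfPlaneSet).differentiableAt hn
      have h2 := differentiableOn_Eis2.differentiableAt hn
      have h3 := differentiableOn_Eis4.differentiableAt hn
      fun_prop)
    (fun τ _ => by rw [deriv_Eis2_add_one, Eis2_add_one, Eis4_add_one])
    (fun τ hτ => by
      rw [deriv_Eis2_inversion hτ, Eis2_inversion hτ, Eis4_inversion hτ]
      field_simp
      linear_combination (24 * π * τ ^ 3 * Eis2 τ - 72 * τ ^ 2 * I) * hI)
    (by
      have h := (tendsto_deriv_Eis2.const_mul 12).sub
        (((tendsto_Eis2.pow 2).sub tendsto_Eis4).const_mul (2 * π * I))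
      simpa using h)
  have hrank := CuspForm.rank_eq_zero_of_weight_lt_twelve (k := 4) (by norm_num)
  have hf0 : f = 0 := rank_zero_iff_forall_zero.mp hrank f
  have h := hf ⟨τ, hτ⟩
  rw [hf0] at h
  exact sub_eq_zero.mp h.symm

/-! ### The Hirota equation for `ϑ` -/

lemma thetaD_three_zero' {τ : ℂ} (hτ : 0 < τ.im) :
    thetaD 3 τ 0 = -π ^ 2 * Eis2 τ * thetaD 1 τ 0 := by
  rw [Eis2_eq_E2 hτ, thetaD_three_zero hτ]

/-- Obtained by applying `∂_τ` to `thetaD_three_zero'` and using the heat equation. -/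
lemma thetaD_five_zero {τ : ℂ} (hτ : 0 < τ.im) :
    thetaD 5 τ 0 = (-(4 * π ^ 3 * I) * deriv Eis2 τ + π ^ 4 * Eis2 τ ^ 2) * thetaD 1 τ 0 := by
  have hπ : (π : ℂ) ≠ 0 := by exact_mod_cast Real.pi_ne_zero
  have hl := hasDerivAt_thetaD_tau 3 0 hτ
  have hr := ((hasDerivAt_Eis2 hτ).const_mul (-π ^ 2 : ℂ)).mul (hasDerivAt_thetaD_tau 1 0 hτ)
  have hev : (fun t => thetaD 3 t 0) =ᶠ[nhds τ] fun t => -π ^ 2 * Eis2 t * thetaD 1 t 0 := by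
    filter_upwards [UpperHalfPlane.isOpen_upperHalfPlaneSet.mem_nhds hτ] with t ht
    exact thetaD_three_zero' ht
  have h := hl.unique (hr.congr_of_eventuallyEq hev)
  norm_num at h
  rw [thetaD_three_zero' hτ] at h
  have h1 : (4 * π * I : ℂ) ≠ 0 := by simp [hπ]
  rw [div_eq_iff h1] at h
  rw [h]
  field_simp

/-- The Hirota form of the differential equation of `ϑ`, equivalent to `12 ℘² - 2 ℘'' = g₂`. -/
lemma hirota_theta {τ : ℂ} (hτ : 0 < τ.im) (z : ℂ) :
    thetaD 0 τ z * thetaD 4 τ z - 4 * thetaD 1 τ z * thetaD 3 τ z + 3 * thetaD 2 τ z ^ 2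
      = -(4 * π ^ 2) * Eis2 τ * (thetaD 0 τ z * thetaD 2 τ z - thetaD 1 τ z ^ 2)
        + 4 * π ^ 3 * I * deriv Eis2 τ * thetaD 0 τ z ^ 2 := by
  have h0 := thetaConst_ne_zero hτ
  obtain ⟨c, hc⟩ := hirota_dep hτ h0 (-(4 * π ^ 2) * Eis2 τ) (by
    rw [thetaD_three_zero' hτ]
    ring)
  have hcc := hirota_const hτ hc
  rw [thetaD_three_zero' hτ, thetaD_five_zero hτ] at hcc
  have hc' : c = 4 * π ^ 3 * I * deriv Eis2 τ := by
    refine mul_right_cancel₀ (pow_ne_zero 2 h0) ?_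
    linear_combination hcc
  have h := hc z
  rw [hc'] at h
  linear_combination h

/-! ### The heat operator on `φ_{0,1}` -/

lemma deriv_thetaJ {τ : ℂ} (hτ : 0 < τ.im) : deriv (thetaJ τ) = thetaD 1 τ := by
  rw [show thetaJ τ = thetaD 0 τ from funext fun z => thetaJ_eq_thetaD τ z]
  exact funext fun z => (hasDerivAt_thetaD_z 0 z hτ).deriv

lemma phi01_eq {τ : ℂ} (hτ : 0 < τ.im) (z : ℂ) : phi01 τ z =
    (3 / π ^ 2 * (thetaD 0 τ z * thetaD 2 τ z - thetaD 1 τ z ^ 2)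
      + Eis2 τ * thetaD 0 τ z ^ 2) * (ModularForm.eta τ ^ 6)⁻¹ := by
  have h : deriv (deriv (thetaJ τ)) z = thetaD 2 τ z := by
    rw [deriv_thetaJ hτ]
    exact (hasDerivAt_thetaD_z 1 z hτ).deriv
  rw [phi01, h, deriv_thetaJ hτ, thetaJ_eq_thetaD, etaD_eq_eta]
  ring

lemma deriv_deriv_phi01 {τ : ℂ} (hτ : 0 < τ.im) (z : ℂ) : deriv (deriv (phi01 τ)) z =
    (3 / π ^ 2 * (thetaD 0 τ z * thetaD 4 τ z - thetaD 2 τ z ^ 2)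
      + Eis2 τ * (2 * thetaD 1 τ z ^ 2 + 2 * thetaD 0 τ z * thetaD 2 τ z))
      * (ModularForm.eta τ ^ 6)⁻¹ := by
  have d := fun k z => hasDerivAt_thetaD_z k z hτ
  have h1 : deriv (phi01 τ) = fun z =>
      (3 / π ^ 2 * (thetaD 0 τ z * thetaD 3 τ z - thetaD 1 τ z * thetaD 2 τ z)
      + Eis2 τ * (2 * thetaD 0 τ z * thetaD 1 τ z)) * (ModularForm.eta τ ^ 6)⁻¹ := by
    rw [show phi01 τ = _ from funext (phi01_eq hτ)]
    ext z
    refine HasDerivAt.deriv (((((((d 0 z).mul (d 2 z)).sub ((d 1 z).pow 2)).const_mul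
      (3 / π ^ 2 : ℂ)).add (((d 0 z).pow 2).const_mul (Eis2 τ))).mul_const
      (ModularForm.eta τ ^ 6)⁻¹).congr_deriv ?_)
    generalize (ModularForm.eta τ ^ 6)⁻¹ = W
    push_cast
    ring
  rw [h1]
  refine HasDerivAt.deriv (((((((d 0 z).mul (d 3 z)).sub ((d 1 z).mul (d 2 z))).const_mul
    (3 / π ^ 2 : ℂ)).add ((((d 0 z).const_mul 2).mul (d 1 z)).const_mul (Eis2 τ))).mul_const
    (ModularForm.eta τ ^ 6)⁻¹).congr_deriv ?_)
  generalize (ModularForm.eta τ ^ 6)⁻¹ = W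
  ring

lemma deriv_tau_phi01 {τ : ℂ} (hτ : 0 < τ.im) (z : ℂ) : deriv (fun t => phi01 t z) τ =
    (3 / π ^ 2 * ((thetaD 2 τ z ^ 2 + thetaD 0 τ z * thetaD 4 τ z
        - 2 * thetaD 1 τ z * thetaD 3 τ z) / (4 * π * I))
      + deriv Eis2 τ * thetaD 0 τ z ^ 2
      + Eis2 τ * (2 * thetaD 0 τ z * thetaD 2 τ z / (4 * π * I))
      - π * I / 2 * Eis2 τ * (3 / π ^ 2 * (thetaD 0 τ z * thetaD 2 τ z - thetaD 1 τ z ^ 2)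
        + Eis2 τ * thetaD 0 τ z ^ 2)) * (ModularForm.eta τ ^ 6)⁻¹ := by
  have d := fun k => hasDerivAt_thetaD_tau k z hτ
  have hη := ModularForm.eta_ne_zero hτ
  have hev : (fun t => phi01 t z) =ᶠ[nhds τ] fun t =>
      (3 / π ^ 2 * (thetaD 0 t z * thetaD 2 t z - thetaD 1 t z ^ 2)
      + Eis2 t * thetaD 0 t z ^ 2) * (ModularForm.eta t ^ 6)⁻¹ := by
    filter_upwards [UpperHalfPlane.isOpen_upperHalfPlaneSet.mem_nhds hτ] with t ht
    exact phi01_eq ht z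
  have hinv : HasDerivAt (fun t => (ModularForm.eta t ^ 6)⁻¹)
      (-(π * I / 2) * Eis2 τ * (ModularForm.eta τ ^ 6)⁻¹) τ := by
    refine (((hasDerivAt_eta hτ).pow 6).inv (pow_ne_zero 6 hη)).congr_deriv ?_
    rw [← Eis2_eq_E2 hτ]
    simp only [Pi.pow_apply]
    field_simp
    norm_num
    ring
  rw [hev.deriv_eq]
  refine HasDerivAt.deriv ((((((((d 0).mul (d 2)).sub ((d 1).pow 2)).const_mul
    (3 / π ^ 2 : ℂ)).add ((hasDerivAt_Eis2 hτ).mul ((d 0).pow 2))).mul hinv)).congr_deriv ?_)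
  simp only [Pi.pow_apply, Pi.mul_apply, Pi.sub_apply, Pi.add_apply]
  norm_num
  ring

/-- `H^{(1)}_{0}(φ_{0,1}) = −(5/2)·E₄·φ_{−2,1}` on `ℍ × ℂ`. -/
theorem statement4 (τ z : ℂ) (hτ : 0 < τ.im) :
    heatMod 1 0 phi01 τ z = -(5/2) * Eis4 τ * phim21 τ z := by
  have hπ : (π : ℂ) ≠ 0 := by exact_mod_cast Real.pi_ne_zero
  have hF := hirota_theta hτ z
  have hR := ramanujan_Eis2 hτ
  have hI := Complex.I_sq
  rw [heatMod, heatOp, deriv_tau_phi01 hτ, deriv_deriv_phi01 hτ, phi01_eq hτ, phim21,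
    thetaJ_eq_thetaD, etaD_eq_eta, div_eq_mul_inv (thetaD 0 τ z ^ 2), ← mul_assoc]
  generalize (ModularForm.eta τ ^ 6)⁻¹ = W
  generalize deriv Eis2 τ = E' at hF hR ⊢
  have hinv : ∀ a x : ℂ, x / (a * π * I) = -I * x / (a * π) := fun a x => by
    rw [div_mul_eq_div_div, Complex.div_I]
    ring
  rw [hinv, hinv, hinv]
  push_cast
  field_simp
  linear_combination (-36) * W * hF - 20 * W * I * π ^ 3 * thetaD 0 τ z ^ 2 * hR
    + W * (192 * thetaD 2 τ z * thetaD 0 τ z * π ^ 2 * Eis2 τ + 72 * thetaD 2 τ z ^ 2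
      + 72 * thetaD 0 τ z * thetaD 4 τ z + 48 * thetaD 0 τ z ^ 2 * π ^ 4 * Eis2 τ ^ 2
      - 144 * thetaD 1 τ z * thetaD 3 τ z - 144 * thetaD 1 τ z ^ 2 * π ^ 2 * Eis2 τ
      - 40 * thetaD 0 τ z ^ 2 * π ^ 4 * (Eis2 τ ^ 2 - Eis4 τ)) * hI
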